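/- arXiv:math/0407145 — 5 statements merged into one kernel-verified Lean document; each statement's English description precedes it below -/
import Mathlib

section
/- Let i, j, k be nonnegative integers with (i, j) ≠ (0, 0). There exists r ∈ (0,1) with F_{ijk}(r) = i·α(r) + j·β′(r) + k·π/3 = 2π if and only if 6i + 3j + 2k > 12 and i + j + k < 6. -/
/-- The angle `α′(r) = arccos(1/(1+r))`. -/
noncomputable def alpha' (r : ℝ) : ℝ := Real.arccos (1 / (1 + r))

/-- The angle `α(r) = π − 2α′(r)`. -/
noncomputable def alphaAngle (r : ℝ) : ℝ := Real.pi - 2 * alpha' r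

/-- The angle `β′(r) = arccos(r/(1+r))`. -/
noncomputable def beta' (r : ℝ) : ℝ := Real.arccos (r / (1 + r))

/-- The angle `β(r) = π − 2β′(r)`. -/
noncomputable def betaAngle (r : ℝ) : ℝ := Real.pi - 2 * beta' r

/-- `F_{ijk}(r) = i·α(r) + j·β′(r) + k·π/3`. -/
noncomputable def F (i j k : ℕ) (r : ℝ) : ℝ :=
  (i : ℝ) * alphaAngle r + (j : ℝ) * beta' r + (k : ℝ) * (Real.pi / 3)

/-! The angles `α` and `β′` are continuous and strictly decreasing in `r ≥ 0`, hence so is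
`F_{ijk}` unless `i = j = 0`. By the intermediate value theorem `F_{ijk}` takes on `(0, 1)` exactly
the values strictly between `(i + j + k) π / 3`, at `r = 1`, and `(6i + 3j + 2k) π / 6`, at
`r = 0`, and the two inequalities say that `2π` is one of them. -/

open Real Set

theorem strictMonoOn_alpha' : StrictMonoOn alpha' (Ici 0) := by
  intro x (hx : 0 ≤ x) y _ hxy
  have hy : 0 < y := hx.trans_lt hxy
  refine arccos_lt_arccos (neg_one_lt_zero.le.trans (by positivity)) ?_ ?_
  · gcongr
  · exact div_le_one_of_le₀ (by linarith) (by positivity)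

theorem strictAntiOn_alphaAngle : StrictAntiOn alphaAngle (Ici 0) := by
  intro x hx y hy hxy
  unfold alphaAngle
  linarith [strictMonoOn_alpha' hx hy hxy]

theorem strictAntiOn_beta' : StrictAntiOn beta' (Ici (-(1 / 2))) := by
  intro x (hx : -(1 / 2) ≤ x) y _ hxy
  have hx' : 0 < 1 + x := by linarith
  have hy' : 0 < 1 + y := by linarith
  refine arccos_lt_arccos ?_ ?_ ?_
  · rw [le_div_iff₀ hx']
    linarith
  · rw [div_lt_div_iff₀ hx' hy']
    linarith
  · exact div_le_one_of_le₀ (by linarith) hy'.le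

theorem continuousOn_alphaAngle : ContinuousOn alphaAngle {-1}ᶜ := by
  have h : ∀ r ∈ ({-1}ᶜ : Set ℝ), 1 + r ≠ 0 := by grind
  unfold alphaAngle alpha'
  fun_prop (disch := assumption)

theorem continuousOn_beta' : ContinuousOn beta' {-1}ᶜ := by
  have h : ∀ r ∈ ({-1}ᶜ : Set ℝ), 1 + r ≠ 0 := by grind
  unfold beta'
  fun_prop (disch := assumption)

theorem arccos_one_half : arccos (1 / 2) = π / 3 :=
  arccos_eq_of_eq_cos (by positivity) (by linarith [pi_pos]) cos_pi_div_three.symm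

theorem alphaAngle_zero : alphaAngle 0 = π := by
  simp [alphaAngle, alpha']

theorem alphaAngle_one : alphaAngle 1 = π / 3 := by
  rw [alphaAngle, alpha', one_add_one_eq_two, arccos_one_half]
  ring

theorem beta'_zero : beta' 0 = π / 2 := by
  simp [beta']

theorem beta'_one : beta' 1 = π / 3 := by
  rw [beta', one_add_one_eq_two, arccos_one_half]

theorem strictAntiOn_F {i j : ℕ} (k : ℕ) (h : (i, j) ≠ (0, 0)) :
    StrictAntiOn (F i j k) (Ici 0) := by
  intro x hx y hy hxy
  have hα : alphaAngle y < alphaAngle x := strictAntiOn_alphaAngle hx hy hxy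
  have hβ : beta' y < beta' x :=
    strictAntiOn_beta'.mono (Ici_subset_Ici.2 (by norm_num)) hx hy hxy
  have hij : 0 < i ∨ 0 < j := by grind
  unfold F
  gcongr ?_ + _
  rcases hij with hi | hj
  · exact add_lt_add_of_lt_of_le (by gcongr) (by gcongr)
  · exact add_lt_add_of_le_of_lt (by gcongr) (by gcongr)

theorem continuousOn_F (i j k : ℕ) : ContinuousOn (F i j k) {-1}ᶜ := by
  have hα := continuousOn_alphaAngle
  have hβ := continuousOn_beta'
  unfold F
  fun_prop

theorem F_zero (i j k : ℕ) : F i j k 0 = (6 * i + 3 * j + 2 * k) * (π / 6) := by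
  rw [F, alphaAngle_zero, beta'_zero]
  ring

theorem F_one (i j k : ℕ) : F i j k 1 = (i + j + k) * (π / 3) := by
  rw [F, alphaAngle_one, beta'_one]
  ring

theorem image_F_Ioo {i j : ℕ} (k : ℕ) (h : (i, j) ≠ (0, 0)) :
    F i j k '' Ioo 0 1 = Ioo ((i + j + k) * (π / 3)) ((6 * i + 3 * j + 2 * k) * (π / 6)) := by
  have hcont : ContinuousOn (F i j k) (Icc 0 1) := (continuousOn_F i j k).mono (by grind)
  have hanti : StrictAntiOn (F i j k) (Icc 0 1) := (strictAntiOn_F k h).mono Icc_subset_Ici_self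
  rw [hcont.image_Ioo_of_strictAntiOn zero_le_one hanti, F_zero, F_one]

/-- For nonnegative integers `i, j, k` with `(i, j) ≠ (0, 0)`, there is an
`r ∈ (0,1)` with `F_{ijk}(r) = 2π` if and only if `6i + 3j + 2k > 12` and
`i + j + k < 6`. -/
theorem exists_root_iff (i j k : ℕ) (h : (i, j) ≠ (0, 0)) :
    (∃ r ∈ Set.Ioo (0 : ℝ) 1, F i j k r = 2 * Real.pi) ↔
      12 < 6 * i + 3 * j + 2 * k ∧ i + j + k < 6 := by
  change 2 * π ∈ F i j k '' Ioo 0 1 ↔ _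
  have hzero : 2 * π < (6 * i + 3 * j + 2 * k) * (π / 6) ↔ 12 < 6 * i + 3 * j + 2 * k := by
    rw [show 2 * π = 12 * (π / 6) by ring, mul_lt_mul_iff_left₀ (by positivity)]
    norm_cast
  have hone : (i + j + k) * (π / 3) < 2 * π ↔ i + j + k < 6 := by
    rw [show 2 * π = 6 * (π / 3) by ring, mul_lt_mul_iff_left₀ (by positivity)]
    norm_cast
  rw [image_F_Ioo k h, mem_Ioo, hzero, hone, and_comm]
end

section
/- Let r₀ = (1 − sin(π/5))/sin(π/5). Then there are no nonnegative integers l, m, n with (l, m) ≠ (0, 0) such that l·α′(r₀) + m·β(r₀) + n·π/3 = 2π. (Hence the value r₀, the only candidate besides the nine listed values for which the small-disc angle equation is solvable, does not admit a compact packing.) -/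
/-!
Measured in units of `π / 30`, the angles `α′(r₀)` and `π / 3` are exactly `9` and `10`, while
`β(r₀)` lies strictly between `8` and `8.2`: the lower bound is `sin 24° + sin 36° = cos 6° < 1`,
and the upper bound says that the defect `1 - cos 6°` is too small to move `24°` by `0.6°`.
The equation thus becomes `9 l + b m + 10 n = 60` with `8 < b < 8.2`. For `m = 0` it forces
`10 ∣ l`, hence `l = 0`. For `m > 0` we have `8 m < 60`, so `m ≤ 7`, and the integer
`60 - (9 l + 8 m + 10 n)` lies strictly between `0` and `m / 5 < 3 / 2`; it is therefore `1`, and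
`m` is `6` or `7`, which would leave `9 l + 10 n = 11` or `3`.
-/

open Real Set

lemma one_add_one_sub_div_self {K : Type*} [DivisionRing K] {s : K} (hs : s ≠ 0) :
    1 + (1 - s) / s = 1 / s := by
  rw [one_add_div hs, add_sub_cancel]

lemma alpha'_one_sub_div_self {s : ℝ} (hs : s ≠ 0) : alpha' ((1 - s) / s) = arccos s := by
  rw [alpha', one_add_one_sub_div_self hs, one_div_one_div]

lemma betaAngle_one_sub_div_self {s : ℝ} (hs : s ≠ 0) :
    betaAngle ((1 - s) / s) = 2 * arcsin (1 - s) := by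
  rw [betaAngle, beta', one_add_one_sub_div_self hs, div_div_div_cancel_right₀ hs, div_one,
    arccos_eq_pi_div_two_sub_arcsin]
  ring

lemma arccos_sin_eq_pi_div_two_sub {x : ℝ} (h₁ : -(π / 2) ≤ x) (h₂ : x ≤ π / 2) :
    arccos (sin x) = π / 2 - x := by
  rw [arccos_eq_pi_div_two_sub_arcsin, arcsin_sin h₁ h₂]

lemma sin_two_mul_pi_div_fifteen_add_sin_pi_div_five :
    sin (2 * π / 15) + sin (π / 5) = cos (π / 30) := by
  have h₁ : 2 * π / 15 = π / 6 - π / 30 := by ring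
  have h₂ : π / 5 = π / 6 + π / 30 := by ring
  rw [h₁, h₂, sin_sub, sin_add, sin_pi_div_six]
  ring

lemma sqrt_three_div_three_hundred_lt_sin_sub_sin :
    √3 / 300 < sin (41 * π / 300) - sin (2 * π / 15) := by
  have hcos : √3 / 2 < cos (27 * π / 200) := by
    rw [← cos_pi_div_six]
    exact cos_lt_cos_of_nonneg_of_le_pi (by positivity) (by linarith [pi_pos])
      (by linarith [pi_pos])
  have hsin : 1 / 300 < sin (π / 600) := by
    have jordan := mul_lt_sin (x := π / 600) (by positivity) (by linarith [pi_pos])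
    rwa [show 2 / π * (π / 600) = 1 / 300 by field_simp; norm_num] at jordan
  calc √3 / 300 = 2 * (1 / 300) * (√3 / 2) := by ring
    _ < 2 * sin (π / 600) * cos (27 * π / 200) := by gcongr
    _ = sin (41 * π / 300) - sin (2 * π / 15) := by rw [sin_sub_sin]; ring_nf

lemma one_sub_cos_pi_div_thirty_lt_sqrt_three_div_three_hundred : 1 - cos (π / 30) < √3 / 300 := by
  have hsqrt : 1.7 < √3 := lt_sqrt_of_sq_lt (by norm_num)
  have hpi : π ^ 2 < 3.15 ^ 2 := pow_lt_pow_left₀ pi_lt_d2 pi_pos.le two_ne_zero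
  linarith [one_sub_sq_div_two_le_cos (x := π / 30)]

lemma arcsin_one_sub_sin_pi_div_five_mem_Ioo :
    arcsin (1 - sin (π / 5)) ∈ Ioo (2 * π / 15) (41 * π / 300) := by
  have hpi := pi_pos
  have hsum := sin_two_mul_pi_div_fifteen_add_sin_pi_div_five
  have hlower : sin (2 * π / 15) < 1 - sin (π / 5) := by
    have hcos : cos (π / 30) < 1 := by
      rw [← cos_zero]
      exact cos_lt_cos_of_nonneg_of_le_pi le_rfl (by linarith) (by positivity)
    linarith
  have hupper : 1 - sin (π / 5) < sin (41 * π / 300) := by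
    linarith [sqrt_three_div_three_hundred_lt_sin_sub_sin,
      one_sub_cos_pi_div_thirty_lt_sqrt_three_div_three_hundred]
  exact ⟨(lt_arcsin_iff_sin_lt' ⟨by linarith, by linarith⟩).2 hlower,
    (arcsin_lt_iff_lt_sin' ⟨by linarith, by linarith⟩).2 hupper⟩

lemma eq_zero_of_nine_mul_add_mul_add_ten_mul_eq_sixty {b : ℝ} (hb : b ∈ Ioo 8 (41 / 5))
    {l m n : ℕ} (h : 9 * l + b * m + 10 * n = 60) : l = 0 ∧ m = 0 := by
  rcases Nat.eq_zero_or_pos m with rfl | hm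
  · have h' : 9 * l + 10 * n = 60 := by
      rw [Nat.cast_zero, mul_zero, add_zero] at h
      exact_mod_cast h
    omega
  · have hm' : (0 : ℝ) < m := by exact_mod_cast hm
    have hlower : 9 * l + 8 * m + 10 * n < 60 := by
      have := mul_lt_mul_of_pos_right hb.1 hm'
      exact_mod_cast (by linarith : (9 * l + 8 * m + 10 * n : ℝ) < 60)
    have hupper : 300 < 45 * l + 41 * m + 50 * n := by
      have := mul_lt_mul_of_pos_right hb.2 hm'
      exact_mod_cast (by linarith : (300 : ℝ) < 45 * l + 41 * m + 50 * n)
    have hm_le : m ≤ 7 := by omega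
    have hgap : 9 * l + 8 * m + 10 * n = 59 := by omega
    obtain rfl | rfl : m = 6 ∨ m = 7 := by omega
    all_goals omega

/-- For `r₀ = (1 − sin(π/5))/sin(π/5)` there is no nontrivial solution of
`l·α′(r₀) + m·β(r₀) + n·π/3 = 2π` in nonnegative integers. -/
theorem no_large_disc_equation_at_r0 :
    ¬ ∃ l m n : ℕ, (l, m) ≠ (0, 0) ∧
      (l : ℝ) * alpha' ((1 - Real.sin (Real.pi / 5)) / Real.sin (Real.pi / 5)) +
      (m : ℝ) * betaAngle ((1 - Real.sin (Real.pi / 5)) / Real.sin (Real.pi / 5)) +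
      (n : ℝ) * (Real.pi / 3) = 2 * Real.pi := by
  rintro ⟨l, m, n, hlm, h⟩
  have hs : sin (π / 5) ≠ 0 :=
    (sin_pos_of_pos_of_lt_pi (by positivity) (by linarith [pi_pos])).ne'
  rw [alpha'_one_sub_div_self hs, betaAngle_one_sub_div_self hs,
    arccos_sin_eq_pi_div_two_sub (by linarith [pi_pos]) (by linarith [pi_pos])] at h
  obtain ⟨hlower, hupper⟩ := arcsin_one_sub_sin_pi_div_five_mem_Ioo
  have hb : 60 * arcsin (1 - sin (π / 5)) / π ∈ Ioo 8 (41 / 5) :=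
    ⟨(lt_div_iff₀ pi_pos).2 (by linarith), (div_lt_iff₀ pi_pos).2 (by linarith)⟩
  have heq : 9 * l + 60 * arcsin (1 - sin (π / 5)) / π * m + 10 * n = 60 := by
    field_simp
    linarith
  obtain ⟨rfl, rfl⟩ := eq_zero_of_nine_mul_add_mul_add_ten_mul_eq_sixty hb heq
  exact hlm rfl
end

section
/- The value r = (2√3 + 1 − 2√(1+√3))/3 lies in (0,1) and satisfies α(r) + 2·β′(r) + 2·π/3 = 2π, and it is the unique r ∈ (0,1) with this property. -/
/-!
The cosines of `x = β′(r)` and `y = α′(r)` sum to `1`, and their product is `r / (1 + r)²`.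
Together these determine `cos (x - y)`, so that prescribing `|x - y|` is a quadratic equation in
`r`. Since `α′(1 / r) = β′(r)`, the replacement of `r` by `1 / r` changes the sign of `x - y`;
accordingly the two roots of the quadratic are reciprocal, and `x - y ≥ 0` selects the one that is
at most `1`. The angle equation says that `x - y = π / 6`.
-/

theorem cos_sub_sq_of_cos_add_cos_eq_one {x y : ℝ} (h : Real.cos x + Real.cos y = 1) :
    Real.cos (x - y) ^ 2 = 2 * (1 + Real.cos (x - y)) * (Real.cos x * Real.cos y) := by
  have sin_mul_sin_sq : (Real.sin x * Real.sin y) ^ 2 =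
      (Real.cos x * Real.cos y) ^ 2 + 2 * (Real.cos x * Real.cos y) := by
    rw [mul_pow, Real.sin_sq, Real.sin_sq]
    linear_combination -(Real.cos x + Real.cos y + 1) * h
  rw [Real.cos_sub]
  linear_combination sin_mul_sin_sq

theorem eq_of_sq_eq_mul_one_add {a b t : ℝ} (ha : 0 ≤ a) (hb : 0 ≤ b)
    (hat : a ^ 2 = t * (1 + a)) (hbt : b ^ 2 = t * (1 + b)) : a = b := by
  have factored : (a - b) * (a + b + a * b) = 0 := by
    linear_combination (1 + b) * hat - (1 + a) * hbt
  rcases mul_eq_zero.1 factored with h | h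
  · exact sub_eq_zero.1 h
  · have hab : 0 ≤ a * b := mul_nonneg ha hb
    linarith

theorem sub_sqrt_sq_sub_one_mem_Ioo {m : ℝ} (hm : 1 < m) : m - √(m ^ 2 - 1) ∈ Set.Ioo 0 1 := by
  have lt_self : √(m ^ 2 - 1) < m := (Real.sqrt_lt' (by linarith)).2 (by linarith)
  have sub_one_lt : m - 1 < √(m ^ 2 - 1) := Real.lt_sqrt_of_sq_lt (by linarith)
  constructor <;> linarith

theorem sq_add_one_eq_two_mul_and_le_one_iff {m r : ℝ} (hm : 1 ≤ m) :
    r ^ 2 + 1 = 2 * m * r ∧ r ≤ 1 ↔ r = m - √(m ^ 2 - 1) := by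
  have sq_sqrt : √(m ^ 2 - 1) ^ 2 = m ^ 2 - 1 := Real.sq_sqrt (by nlinarith)
  constructor
  · rintro ⟨quadratic, hr⟩
    rw [eq_sub_iff_add_eq, ← eq_sub_iff_add_eq', Real.sqrt_eq_iff_eq_sq (by nlinarith)
      (by linarith)]
    linear_combination -quadratic
  · rintro rfl
    have sub_one_le : m - 1 ≤ √(m ^ 2 - 1) := Real.le_sqrt_of_sq_le (by linarith)
    exact ⟨by linear_combination sq_sqrt, by linarith⟩

section Radius

variable {r : ℝ}

theorem cos_alpha' (hr : 0 ≤ r) : Real.cos (alpha' r) = 1 / (1 + r) := by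
  have nonneg : 0 ≤ 1 / (1 + r) := by positivity
  exact Real.cos_arccos (by linarith) (div_le_one_of_le₀ (by linarith) (by linarith))

theorem cos_beta' (hr : 0 ≤ r) : Real.cos (beta' r) = r / (1 + r) := by
  have nonneg : 0 ≤ r / (1 + r) := by positivity
  exact Real.cos_arccos (by linarith) (div_le_one_of_le₀ (by linarith) (by linarith))

theorem alpha'_mem_Icc (hr : 0 ≤ r) : alpha' r ∈ Set.Icc 0 (Real.pi / 2) :=
  ⟨Real.arccos_nonneg _, Real.arccos_le_pi_div_two.2 (by positivity)⟩

theorem beta'_mem_Icc (hr : 0 ≤ r) : beta' r ∈ Set.Icc 0 (Real.pi / 2) :=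
  ⟨Real.arccos_nonneg _, Real.arccos_le_pi_div_two.2 (by positivity)⟩

theorem alpha'_le_beta'_iff (hr : 0 ≤ r) : alpha' r ≤ beta' r ↔ r ≤ 1 := by
  have mem_Icc_zero_pi {x : ℝ} (hx : x ∈ Set.Icc 0 (Real.pi / 2)) : x ∈ Set.Icc 0 Real.pi :=
    ⟨hx.1, by linarith [hx.2, Real.pi_pos]⟩
  rw [← Real.strictAntiOn_cos.le_iff_ge (mem_Icc_zero_pi (beta'_mem_Icc hr))
    (mem_Icc_zero_pi (alpha'_mem_Icc hr)), cos_alpha' hr, cos_beta' hr,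
    div_le_div_iff_of_pos_right (by linarith)]

theorem cos_beta'_sub_alpha'_eq_iff (hr : 0 ≤ r) {c : ℝ} (hc : 0 ≤ c) :
    Real.cos (beta' r - alpha' r) = c ↔ c ^ 2 * (1 + r) ^ 2 = 2 * (1 + c) * r := by
  have one_add_ne_zero : 1 + r ≠ 0 := by positivity
  have sum_eq_one : Real.cos (beta' r) + Real.cos (alpha' r) = 1 := by
    rw [cos_beta' hr, cos_alpha' hr]
    field_simp
    ring
  have cos_sub_sq := cos_sub_sq_of_cos_add_cos_eq_one sum_eq_one
  have cos_sub_nonneg : 0 ≤ Real.cos (beta' r - alpha' r) := by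
    obtain ⟨hα, hα'⟩ := alpha'_mem_Icc hr
    obtain ⟨hβ, hβ'⟩ := beta'_mem_Icc hr
    exact Real.cos_nonneg_of_mem_Icc ⟨by linarith, by linarith⟩
  rw [cos_beta' hr, cos_alpha' hr] at cos_sub_sq
  have quadratic_iff : c ^ 2 * (1 + r) ^ 2 = 2 * (1 + c) * r ↔
      c ^ 2 = 2 * (r / (1 + r) * (1 / (1 + r))) * (1 + c) := by
    field_simp
  rw [quadratic_iff]
  constructor
  · rintro rfl
    linear_combination cos_sub_sq
  · exact eq_of_sq_eq_mul_one_add cos_sub_nonneg hc (by linear_combination cos_sub_sq)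

theorem beta'_sub_alpha'_eq_iff (hr : 0 ≤ r) {θ : ℝ} (hθ : θ ∈ Set.Icc 0 (Real.pi / 2)) :
    beta' r - alpha' r = θ ↔
      Real.cos θ ^ 2 * (1 + r) ^ 2 = 2 * (1 + Real.cos θ) * r ∧ r ≤ 1 := by
  obtain ⟨hθ₀, hθ₁⟩ := hθ
  have cos_nonneg : 0 ≤ Real.cos θ := Real.cos_nonneg_of_mem_Icc ⟨by linarith, hθ₁⟩
  rw [← cos_beta'_sub_alpha'_eq_iff hr cos_nonneg, ← alpha'_le_beta'_iff hr]
  constructor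
  · rintro rfl
    exact ⟨rfl, sub_nonneg.1 hθ₀⟩
  · rintro ⟨cos_eq, hle⟩
    have hα := (alpha'_mem_Icc hr).1
    have hβ := (beta'_mem_Icc hr).2
    exact Real.injOn_cos ⟨by linarith, by linarith⟩ ⟨hθ₀, by linarith⟩ cos_eq

theorem alphaAngle_add_two_mul_beta'_add_eq_two_pi_iff :
    alphaAngle r + 2 * beta' r + 2 * (Real.pi / 3) = 2 * Real.pi ↔
      beta' r - alpha' r = Real.pi / 6 := by
  unfold alphaAngle
  constructor <;> intro h <;> linarith

theorem beta'_sub_alpha'_eq_pi_div_six_iff (hr : 0 ≤ r) :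
    beta' r - alpha' r = Real.pi / 6 ↔
      r ^ 2 + 1 = 2 * ((2 * √3 + 1) / 3) * r ∧ r ≤ 1 := by
  have sq_sqrt_three : √3 ^ 2 = 3 := Real.sq_sqrt (by norm_num)
  have hpi := Real.pi_pos
  rw [beta'_sub_alpha'_eq_iff hr ⟨by linarith, by linarith⟩, Real.cos_pi_div_six, div_pow,
    sq_sqrt_three]
  refine and_congr_left' ⟨fun h => ?_, fun h => ?_⟩
  · linear_combination 4 / 3 * h
  · linear_combination 3 / 4 * h

end Radius

theorem sub_two_mul_sqrt_div_three_eq :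
    (2 * √3 + 1 - 2 * √(1 + √3)) / 3 =
      (2 * √3 + 1) / 3 - √(((2 * √3 + 1) / 3) ^ 2 - 1) := by
  have sq_sqrt_three : √3 ^ 2 = 3 := Real.sq_sqrt (by norm_num)
  have discriminant : ((2 * √3 + 1) / 3) ^ 2 - 1 = (2 / 3) ^ 2 * (1 + √3) := by
    linear_combination 4 / 9 * sq_sqrt_three
  rw [discriminant, Real.sqrt_mul (by positivity), Real.sqrt_sq (by norm_num)]
  ring

theorem c5_equation_general :
    (2 * √3 + 1 - 2 * √(1 + √3)) / 3 ∈ Set.Ioo (0 : ℝ) 1 ∧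
    ∀ r : ℝ, 0 ≤ r →
      (alphaAngle r + 2 * beta' r + 2 * (Real.pi / 3) = 2 * Real.pi ↔
        r = (2 * √3 + 1 - 2 * √(1 + √3)) / 3) := by
  have one_lt : 1 < (2 * √3 + 1) / 3 := by
    have : 1 < √3 := Real.lt_sqrt_of_sq_lt (by norm_num)
    linarith
  rw [sub_two_mul_sqrt_div_three_eq]
  refine ⟨sub_sqrt_sq_sub_one_mem_Ioo one_lt, fun r hr => ?_⟩
  rw [alphaAngle_add_two_mul_beta'_add_eq_two_pi_iff, beta'_sub_alpha'_eq_pi_div_six_iff hr,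
    sq_add_one_eq_two_mul_and_le_one_iff one_lt.le]

/-- `r = (2√3 + 1 − 2√(1+√3))/3` lies in `(0,1)`, satisfies
`α(r) + 2β′(r) + 2π/3 = 2π`, and is the unique `r ∈ (0,1)` with this
property. -/
theorem c5_equation :
    (2 * Real.sqrt 3 + 1 - 2 * Real.sqrt (1 + Real.sqrt 3)) / 3 ∈ Set.Ioo (0 : ℝ) 1 ∧
    alphaAngle ((2 * Real.sqrt 3 + 1 - 2 * Real.sqrt (1 + Real.sqrt 3)) / 3) +
      2 * beta' ((2 * Real.sqrt 3 + 1 - 2 * Real.sqrt (1 + Real.sqrt 3)) / 3) +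
      2 * (Real.pi / 3) = 2 * Real.pi ∧
    ∀ r ∈ Set.Ioo (0 : ℝ) 1,
      alphaAngle r + 2 * beta' r + 2 * (Real.pi / 3) = 2 * Real.pi →
      r = (2 * Real.sqrt 3 + 1 - 2 * Real.sqrt (1 + Real.sqrt 3)) / 3 := by
  obtain ⟨mem, eq_iff⟩ := c5_equation_general
  exact ⟨mem, (eq_iff _ mem.1.le).2 rfl, fun r hr => (eq_iff r hr.1.le).1⟩
end

section
/- The value r = sin(π/12)/(1 − sin(π/12)) lies in (0,1) and satisfies 4·β′(r) + π/3 = 2π (equivalently β′(r) = 5π/12), and it is the unique r ∈ (0,1) with this property. -/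
/-! The Möbius map `r ↦ r / (1 + r)` is inverted by `s ↦ s / (1 - s)`, so an angle `β′(r) = θ`
determines the radius as `r = cos θ / (1 - cos θ)`. The equation prescribes `θ = 5π/12`, the
complement of `π/12`, and this radius is less than `1` because `sin (π/12) < sin (π/6) = 1/2`. -/

section Field

variable {K : Type*} [Field K]

theorem div_one_add_eq_iff {r s : K} (hr : 1 + r ≠ 0) (hs : 1 - s ≠ 0) :
    r / (1 + r) = s ↔ r = s / (1 - s) := by
  rw [div_eq_iff hr, eq_div_iff hs]
  constructor <;> intro h <;> linear_combination h

theorem div_one_sub_mem_Ioo [LinearOrder K] [IsStrictOrderedRing K] {s : K}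
    (hs : s ∈ Set.Ioo 0 (1 / 2)) : s / (1 - s) ∈ Set.Ioo 0 1 := by
  obtain ⟨hs₀, hs₁⟩ := hs
  have hsub : s < 1 - s := by linarith
  have hpos : 0 < 1 - s := hs₀.trans hsub
  exact ⟨div_pos hs₀ hpos, (div_lt_one hpos).2 hsub⟩

end Field

theorem arccos_eq_iff_eq_cos {x θ : ℝ} (hθ : θ ∈ Set.Ioo 0 Real.pi) :
    Real.arccos x = θ ↔ x = Real.cos θ := by
  refine ⟨?_, fun h ↦ h ▸ Real.arccos_cos hθ.1.le hθ.2.le⟩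
  rintro rfl
  exact (Real.cos_arccos (Real.arccos_lt_pi.1 hθ.2).le (Real.arccos_pos.1 hθ.1).le).symm

theorem beta'_eq_iff {r θ : ℝ} (hr : 1 + r ≠ 0) (hθ : θ ∈ Set.Ioo 0 Real.pi) :
    beta' r = θ ↔ r = Real.cos θ / (1 - Real.cos θ) := by
  have hcos : Real.cos θ < 1 := by
    simpa using Real.cos_lt_cos_of_nonneg_of_le_pi le_rfl hθ.2.le hθ.1
  rw [beta', arccos_eq_iff_eq_cos hθ, div_one_add_eq_iff hr (sub_pos.2 hcos).ne']

theorem cos_five_pi_div_twelve : Real.cos (5 * Real.pi / 12) = Real.sin (Real.pi / 12) := by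
  rw [← Real.cos_pi_div_two_sub]
  ring_nf

theorem sin_pi_div_twelve_mem_Ioo : Real.sin (Real.pi / 12) ∈ Set.Ioo (0 : ℝ) (1 / 2) := by
  have hpi := Real.pi_pos
  refine ⟨Real.sin_pos_of_pos_of_lt_pi (by linarith) (by linarith), ?_⟩
  rw [← Real.sin_pi_div_six]
  exact Real.sin_lt_sin_of_lt_of_le_pi_div_two (by linarith) (by linarith) (by linarith)

/-- `r = sin(π/12)/(1 − sin(π/12))` lies in `(0,1)`, satisfies
`4β′(r) + π/3 = 2π` (equivalently `β′(r) = 5π/12`), and is the unique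
`r ∈ (0,1)` with this property. -/
theorem c6_equation :
    Real.sin (Real.pi / 12) / (1 - Real.sin (Real.pi / 12)) ∈ Set.Ioo (0 : ℝ) 1 ∧
    4 * beta' (Real.sin (Real.pi / 12) / (1 - Real.sin (Real.pi / 12))) +
      Real.pi / 3 = 2 * Real.pi ∧
    beta' (Real.sin (Real.pi / 12) / (1 - Real.sin (Real.pi / 12))) =
      5 * Real.pi / 12 ∧
    ∀ r ∈ Set.Ioo (0 : ℝ) 1, 4 * beta' r + Real.pi / 3 = 2 * Real.pi →
      r = Real.sin (Real.pi / 12) / (1 - Real.sin (Real.pi / 12)) := by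
  have hmem := div_one_sub_mem_Ioo sin_pi_div_twelve_mem_Ioo
  have hequation (r : ℝ) : 4 * beta' r + Real.pi / 3 = 2 * Real.pi ↔
      beta' r = 5 * Real.pi / 12 := by
    constructor <;> intro h <;> linarith
  have hsolution {r : ℝ} (hr : 0 < r) : beta' r = 5 * Real.pi / 12 ↔
      r = Real.sin (Real.pi / 12) / (1 - Real.sin (Real.pi / 12)) := by
    rw [← cos_five_pi_div_twelve]
    have hpi := Real.pi_pos
    exact beta'_eq_iff (by linarith) ⟨by linarith, by linarith⟩
  have hbeta := (hsolution hmem.1).2 rfl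
  exact ⟨hmem, (hequation _).2 hbeta, hbeta,
    fun r hr h ↦ (hsolution hr.1).1 ((hequation r).1 h)⟩
end

section
/- The value r = (√17 − 3)/4 lies in (0,1) and satisfies 2·α(r) + 2·β′(r) = 2π, and it is the unique r ∈ (0,1) with this property. -/
theorem two_mul_arccos {x : ℝ} (hx : 0 ≤ x) (hx₁ : x ≤ 1) :
    2 * Real.arccos x = Real.arccos (2 * x ^ 2 - 1) := by
  have hle : Real.arccos x ≤ Real.pi / 2 := Real.arccos_le_pi_div_two.2 hx
  have hcos : Real.cos (2 * Real.arccos x) = 2 * x ^ 2 - 1 := by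
    rw [Real.cos_two_mul, Real.cos_arccos (by linarith) hx₁]
  rw [← hcos, Real.arccos_cos (by linarith [Real.arccos_nonneg x]) (by linarith)]

theorem arccos_eq_two_mul_arccos_iff {x y : ℝ} (hx : x ∈ Set.Icc 0 1) (hy : y ∈ Set.Icc (-1) 1) :
    Real.arccos y = 2 * Real.arccos x ↔ y = 2 * x ^ 2 - 1 := by
  have hsq : x ^ 2 ≤ 1 := pow_le_one₀ hx.1 hx.2
  rw [two_mul_arccos hx.1 hx.2,
    Real.arccos_inj hy.1 hy.2 (by linarith [sq_nonneg x]) (by linarith)]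

theorem two_mul_alphaAngle_add_two_mul_beta'_eq_two_pi_iff {r : ℝ} :
    2 * alphaAngle r + 2 * beta' r = 2 * Real.pi ↔ beta' r = 2 * alpha' r := by
  unfold alphaAngle
  constructor <;> intro h <;> linarith

theorem beta'_eq_two_mul_alpha'_iff {r : ℝ} (hr : 0 ≤ r) :
    beta' r = 2 * alpha' r ↔ 2 * r ^ 2 + 3 * r - 1 = 0 := by
  have hx : 1 / (1 + r) ∈ Set.Icc 0 1 :=
    ⟨by positivity, div_le_one_of_le₀ (by linarith) (by positivity)⟩
  have hy : r / (1 + r) ∈ Set.Icc (-1) 1 :=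
    ⟨neg_one_lt_zero.le.trans (by positivity), div_le_one_of_le₀ (by linarith) (by positivity)⟩
  calc beta' r = 2 * alpha' r
    _ ↔ r / (1 + r) = 2 * (1 / (1 + r)) ^ 2 - 1 := arccos_eq_two_mul_arccos_iff hx hy
    _ ↔ 2 * r ^ 2 + 3 * r - 1 = 0 := by
      field_simp
      constructor <;> intro h <;> linarith

theorem sqrt_seventeen_sub_three_div_four_mem_Ioo : (Real.sqrt 17 - 3) / 4 ∈ Set.Ioo (0 : ℝ) 1 := by
  have hlo : 3 < Real.sqrt 17 := Real.lt_sqrt_of_sq_lt (by norm_num)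
  have hhi : Real.sqrt 17 < 7 := (Real.sqrt_lt' (by norm_num)).2 (by norm_num)
  constructor <;> linarith

theorem two_mul_sq_add_three_mul_sub_one_eq_zero_iff {r : ℝ} (hr : 0 ≤ r) :
    2 * r ^ 2 + 3 * r - 1 = 0 ↔ r = (Real.sqrt 17 - 3) / 4 := by
  have hdiscrim : discrim 2 3 (-1) = Real.sqrt 17 * Real.sqrt 17 := by
    rw [Real.mul_self_sqrt (by norm_num), discrim]
    norm_num
  have hneg : r ≠ (-3 - Real.sqrt 17) / (2 * 2) := by
    intro h
    linarith [Real.sqrt_nonneg 17]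
  calc 2 * r ^ 2 + 3 * r - 1 = 0
    _ ↔ 2 * (r * r) + 3 * r + -1 = 0 := by rw [sq, sub_eq_add_neg]
    _ ↔ r = (-3 + Real.sqrt 17) / (2 * 2) := by
      rw [quadratic_eq_zero_iff two_ne_zero hdiscrim, or_iff_left hneg]
    _ ↔ r = (Real.sqrt 17 - 3) / 4 := by
      rw [neg_add_eq_sub]
      norm_num

theorem c7_equation_general :
    (Real.sqrt 17 - 3) / 4 ∈ Set.Ioo (0 : ℝ) 1 ∧
    ∀ r : ℝ, 0 ≤ r →
      (2 * alphaAngle r + 2 * beta' r = 2 * Real.pi ↔ r = (Real.sqrt 17 - 3) / 4) :=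
  ⟨sqrt_seventeen_sub_three_div_four_mem_Ioo, fun _ hr =>
    two_mul_alphaAngle_add_two_mul_beta'_eq_two_pi_iff.trans <|
      (beta'_eq_two_mul_alpha'_iff hr).trans (two_mul_sq_add_three_mul_sub_one_eq_zero_iff hr)⟩

/-- `r = (√17 − 3)/4` lies in `(0,1)`, satisfies `2α(r) + 2β′(r) = 2π`, and is
the unique `r ∈ (0,1)` with this property. -/
theorem c7_equation :
    (Real.sqrt 17 - 3) / 4 ∈ Set.Ioo (0 : ℝ) 1 ∧
    2 * alphaAngle ((Real.sqrt 17 - 3) / 4) +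
      2 * beta' ((Real.sqrt 17 - 3) / 4) = 2 * Real.pi ∧
    ∀ r ∈ Set.Ioo (0 : ℝ) 1, 2 * alphaAngle r + 2 * beta' r = 2 * Real.pi →
      r = (Real.sqrt 17 - 3) / 4 := by
  obtain ⟨hmem, hiff⟩ := c7_equation_general
  exact ⟨hmem, (hiff _ hmem.1.le).2 rfl, fun r hr => (hiff r hr.1.le).1⟩
end
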